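/- For every n ≥ 1, every measurable function f : X → [1,∞), and every measurable φ : X → ℝ with sup_{x∈X} |φ(x)|/f(x) < ∞, one has |ξP^n φ − ξ'P^n φ| ≤ (sup_{x∈X} |φ(x)|/f(x)) · E*_{ξ⊗ξ'}[(f(X_n) + f(X'_n)) (1−ε)^{N_{n−1}}]. -/

import Mathlib

/-!
Write `Q g x = ∫ g dP(x, ·)` for the action of `P` on nonnegative functions, let `g = φ⁺`, `h = φ⁻`,
and let `Wₙ(x, x')` be the expectation `E*_{(x,x')}[(f(Xₙ) + f(X'ₙ)) (1-ε)^{N_{n-1}}]`.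
The heart of the proof is the pointwise bound

  `Qⁿg(x) + Qⁿh(x') ≤ Qⁿh(x) + Qⁿg(x') + c Wₙ(x, x')`,

a subtraction-free form of `Pⁿφ(x) - Pⁿφ(x') ≤ c Wₙ(x, x')` that stays meaningful when some of the
integrals are infinite. It is proved by induction on `n` (`iterate_kernelOp_add_le`), using
`Wₙ₊₁(p) = r(p) ∫ Wₙ dP*(p, ·)` with `r = 1 - ε` on `C̄` and `r = 1` off `C̄` (`kexp_weight_succ`).
Off `C̄`, `P*(p, ·)` couples `P(x, ·)` and `P(x', ·)`, so it suffices to integrate the bound.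
On `C̄`, `P(x, ·)` and `P(x', ·)` are `(1-ε)` times the marginals of `R̄(p, ·)` plus the common part
`ε ν_p`, which contributes the same amount `ε (∫ Qⁿg dν_p + ∫ Qⁿh dν_p)` to both sides.
Both cases are instances of `kernelOp_coupling_step`.

Integrating over `ξ ⊗ ξ'` gives `ξPⁿφ - ξ'Pⁿφ ≤ c E*[…]`; exchanging `g` and `h` gives the other sign.
-/

open MeasureTheory ProbabilityTheory Set
open scoped ENNReal

/-- `iterMeas P ξ n = ξ Pⁿ`. -/
noncomputable def iterMeas {X : Type*} [MeasurableSpace X] (P : Kernel X X) (ξ : Measure X) :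
    ℕ → Measure X
  | 0 => ξ
  | n + 1 => (iterMeas P ξ n).bind (fun x => P x)

/-- Expectation `E_y[φ(X₀,…,Xₙ)]` for the Markov chain with kernel `κ` started at `y`. -/
noncomputable def kexp {Y : Type*} [MeasurableSpace Y] (κ : Kernel Y Y) :
    (n : ℕ) → Y → ((Fin (n + 1) → Y) → ℝ≥0∞) → ℝ≥0∞
  | 0, y, φ => φ (fun _ => y)
  | n + 1, y, φ => ∫⁻ y', kexp κ n y' (fun v => φ (Fin.cons y v)) ∂(κ y)

/-- Expectation `E_μ[φ(X₀,…,Xₙ)]`. -/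
noncomputable def chainExp {Y : Type*} [MeasurableSpace Y] (κ : Kernel Y Y) (μ : Measure Y)
    (n : ℕ) (φ : (Fin (n + 1) → Y) → ℝ≥0∞) : ℝ≥0∞ :=
  ∫⁻ y, kexp κ n y φ ∂μ

/-- The action `g ↦ (x ↦ ∫ g dP(x, ·))` of a kernel on nonnegative functions. -/
noncomputable def kernelOp {X : Type*} [MeasurableSpace X] (P : Kernel X X) (g : X → ℝ≥0∞) :
    X → ℝ≥0∞ := fun x => ∫⁻ y, g y ∂(P x)

lemma measurable_iterate_kernelOp {X : Type*} [MeasurableSpace X] (P : Kernel X X)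
    {g : X → ℝ≥0∞} (hg : Measurable g) (n : ℕ) : Measurable ((kernelOp P)^[n] g) := by
  induction n with
  | zero => simpa using hg
  | succ n ih =>
    rw [Function.iterate_succ_apply']
    exact ih.lintegral_kernel

lemma lintegral_iterMeas {X : Type*} [MeasurableSpace X] (P : Kernel X X) (ξ : Measure X)
    (n : ℕ) {g : X → ℝ≥0∞} (hg : Measurable g) :
    ∫⁻ x, g x ∂(iterMeas P ξ n) = ∫⁻ x, (kernelOp P)^[n] g x ∂ξ := by
  induction n generalizing g with
  | zero => rfl
  | succ n ih =>
    have hm : Measurable (kernelOp P g) := hg.lintegral_kernel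
    rw [Function.iterate_succ_apply, ← ih hm, iterMeas,
      Measure.lintegral_bind P.measurable.aemeasurable hg.aemeasurable]
    rfl

lemma kexp_const_mul {Y : Type*} [MeasurableSpace Y] (κ : Kernel Y Y) {r : ℝ≥0∞} (hr : r ≠ ∞)
    (n : ℕ) (y : Y) (Φ : (Fin (n + 1) → Y) → ℝ≥0∞) :
    kexp κ n y (fun v => r * Φ v) = r * kexp κ n y Φ := by
  induction n generalizing y with
  | zero => rfl
  | succ n ih =>
    simp only [kexp, ih]
    exact lintegral_const_mul' _ _ hr

/-- The path functional `F(yₙ) a^{N_{n-1}}`, with `N_{n-1}` the number of visits to `C` strictly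
before time `n`. -/
noncomputable def pathWeight {Y : Type*} (C : Set Y) (a : ℝ≥0∞) (F : Y → ℝ≥0∞) (n : ℕ)
    (v : Fin (n + 1) → Y) : ℝ≥0∞ :=
  F (v (Fin.last n)) * a ^ (∑ i : Fin n, Set.indicator C (fun _ => (1 : ℕ)) (v i.castSucc))

/-- One-step recursion for the weighted expectation: the first state contributes a factor `a` if it
lies in `C`, and the rest is the same expectation from the second state on. -/
lemma kexp_weight_succ {Y : Type*} [MeasurableSpace Y] (κ : Kernel Y Y) (C : Set Y)
    {a : ℝ≥0∞} (ha : a ≠ ∞) (F : Y → ℝ≥0∞) (n : ℕ) (y : Y) :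
    kexp κ (n + 1) y (pathWeight C a F (n + 1)) =
      a ^ (Set.indicator C (fun _ => (1 : ℕ)) y) *
        ∫⁻ y', kexp κ n y' (pathWeight C a F n) ∂(κ y) := by
  have hcons : ∀ v : Fin (n + 1) → Y,
      pathWeight C a F (n + 1) (Fin.cons y v : Fin (n + 2) → Y) =
        a ^ (Set.indicator C (fun _ => (1 : ℕ)) y) * pathWeight C a F n v := by
    intro v
    unfold pathWeight
    rw [Fin.sum_univ_succ, pow_add, ← Fin.succ_last, Fin.cons_succ, Fin.castSucc_zero,
      Fin.cons_zero]
    simp only [← Fin.succ_castSucc, Fin.cons_succ]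
    ring
  have hr : a ^ (Set.indicator C (fun _ => (1 : ℕ)) y) ≠ ∞ := ENNReal.pow_ne_top ha
  simp only [kexp, hcons, kexp_const_mul κ hr]
  exact lintegral_const_mul' _ _ hr

/-- Integrating the pointwise bound over one step, when `μ₁` and `μ₂` are `a` times the marginals
of `ρ` plus a common part `b • ν`. -/
lemma kernelOp_coupling_step {X : Type*} [MeasurableSpace X] (μ₁ μ₂ ν : Measure X)
    (ρ : Measure (X × X)) {a b c : ℝ≥0∞} (hc : c ≠ ∞)
    (h₁ : ∀ A : Set X, MeasurableSet A → a * ρ (A ×ˢ Set.univ) + b * ν A = μ₁ A)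
    (h₂ : ∀ A : Set X, MeasurableSet A → a * ρ (Set.univ ×ˢ A) + b * ν A = μ₂ A)
    {g h : X → ℝ≥0∞} (hg : Measurable g) (hh : Measurable h) (W : X × X → ℝ≥0∞)
    (hW : ∀ p : X × X, g p.1 + h p.2 ≤ h p.1 + g p.2 + c * W p) :
    ∫⁻ x, g x ∂μ₁ + ∫⁻ x, h x ∂μ₂ ≤
      ∫⁻ x, h x ∂μ₁ + ∫⁻ x, g x ∂μ₂ + c * (a * ∫⁻ p, W p ∂ρ) := by
  have e₁ : μ₁ = a • ρ.map Prod.fst + b • ν := by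
    ext A hA
    rw [← h₁ A hA, Set.prod_univ]
    simp [Measure.map_apply measurable_fst hA]
  have e₂ : μ₂ = a • ρ.map Prod.snd + b • ν := by
    ext A hA
    rw [← h₂ A hA, Set.univ_prod]
    simp [Measure.map_apply measurable_snd hA]
  have i₁ : ∀ {k : X → ℝ≥0∞}, Measurable k →
      ∫⁻ x, k x ∂μ₁ = a * ∫⁻ p, k p.1 ∂ρ + b * ∫⁻ x, k x ∂ν := by
    intro k hk
    rw [e₁, lintegral_add_measure, lintegral_smul_measure, lintegral_smul_measure,
      lintegral_map hk measurable_fst, smul_eq_mul, smul_eq_mul]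
  have i₂ : ∀ {k : X → ℝ≥0∞}, Measurable k →
      ∫⁻ x, k x ∂μ₂ = a * ∫⁻ p, k p.2 ∂ρ + b * ∫⁻ x, k x ∂ν := by
    intro k hk
    rw [e₂, lintegral_add_measure, lintegral_smul_measure, lintegral_smul_measure,
      lintegral_map hk measurable_snd, smul_eq_mul, smul_eq_mul]
  have key : ∫⁻ p, g p.1 ∂ρ + ∫⁻ p, h p.2 ∂ρ ≤
      ∫⁻ p, h p.1 ∂ρ + ∫⁻ p, g p.2 ∂ρ + c * ∫⁻ p, W p ∂ρ := by
    have mg : Measurable fun p : X × X => g p.1 := hg.comp measurable_fst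
    have mh : Measurable fun p : X × X => h p.1 := hh.comp measurable_fst
    have mhg : Measurable fun p : X × X => h p.1 + g p.2 := mh.add (hg.comp measurable_snd)
    rw [← lintegral_add_left mg, ← lintegral_add_left mh, ← lintegral_const_mul' _ _ hc,
      ← lintegral_add_left mhg]
    exact lintegral_mono hW
  rw [i₁ hg, i₁ hh, i₂ hg, i₂ hh]
  calc _ = a * (∫⁻ p, g p.1 ∂ρ + ∫⁻ p, h p.2 ∂ρ) + b * (∫⁻ x, g x ∂ν + ∫⁻ x, h x ∂ν) := by ring
    _ ≤ a * (∫⁻ p, h p.1 ∂ρ + ∫⁻ p, g p.2 ∂ρ + c * ∫⁻ p, W p ∂ρ) +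
        b * (∫⁻ x, g x ∂ν + ∫⁻ x, h x ∂ν) := by gcongr
    _ = _ := by ring

/-- The pointwise bound, for any kernel `κ` whose marginals, scaled by `a` on `C` and by `1` off
`C`, differ from `P(x, ·)` and `P(x', ·)` by a common measure `b • ν p` on `C` and by nothing
off `C`. -/
lemma iterate_kernelOp_add_le {X : Type*} [MeasurableSpace X] (P : Kernel X X)
    (κ : Kernel (X × X) (X × X)) (C : Set (X × X)) (ν : X × X → Measure X) {a b c : ℝ≥0∞}
    (ha : a ≠ ∞) (hc : c ≠ ∞)
    (hon₁ : ∀ p ∈ C, ∀ A : Set X, MeasurableSet A →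
      a * κ p (A ×ˢ Set.univ) + b * ν p A = P p.1 A)
    (hon₂ : ∀ p ∈ C, ∀ A : Set X, MeasurableSet A →
      a * κ p (Set.univ ×ˢ A) + b * ν p A = P p.2 A)
    (hoff : ∀ p ∉ C, ∀ A : Set X, MeasurableSet A →
      κ p (A ×ˢ Set.univ) = P p.1 A ∧ κ p (Set.univ ×ˢ A) = P p.2 A)
    {g h : X → ℝ≥0∞} (hg : Measurable g) (hh : Measurable h) (F : X × X → ℝ≥0∞)
    (hF : ∀ p : X × X, g p.1 + h p.2 ≤ h p.1 + g p.2 + c * F p) (n : ℕ) (p : X × X) :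
    (kernelOp P)^[n] g p.1 + (kernelOp P)^[n] h p.2 ≤
      (kernelOp P)^[n] h p.1 + (kernelOp P)^[n] g p.2 + c * kexp κ n p (pathWeight C a F n) := by
  induction n generalizing p with
  | zero => simpa [kexp, pathWeight] using hF p
  | succ n ih =>
    have mg := measurable_iterate_kernelOp P hg n
    have mh := measurable_iterate_kernelOp P hh n
    rw [kexp_weight_succ κ C ha]
    simp only [Function.iterate_succ_apply']
    by_cases hp : p ∈ C
    · rw [Set.indicator_of_mem hp, pow_one]
      exact
        kernelOp_coupling_step (P p.1) (P p.2) (ν p) (κ p) hc (hon₁ p hp) (hon₂ p hp) mg mh _ ih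
    · -- Off `C` the common part is absent: apply the one-step bound with `a = 1`, `b = 0`.
      rw [Set.indicator_of_notMem hp, pow_zero]
      exact
        kernelOp_coupling_step (a := 1) (b := 0) (P p.1) (P p.2) 0 (κ p) hc
          (fun A hA => by simpa using (hoff p hp A hA).1)
          (fun A hA => by simpa using (hoff p hp A hA).2) mg mh _ ih

/-- The key coupling inequality (9):
`|ξPⁿφ - ξ'Pⁿφ| ≤ (sup |φ|/f) E*_{ξ⊗ξ'}[(f(Xₙ) + f(X'ₙ))(1-ε)^{N_{n-1}}]`. -/
theorem coupling_inequality
    {X : Type*} [MeasurableSpace X] (P : Kernel X X) [IsMarkovKernel P]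
    -- (A1)
    (Cbar : Set (X × X)) (hCbar : MeasurableSet Cbar)
    (ε : ℝ) (hε0 : 0 < ε) (hε1 : ε < 1)
    (ν : X × X → Measure X) (hν : ∀ p ∈ Cbar, IsProbabilityMeasure (ν p))
    (hminor : ∀ p ∈ Cbar, ∀ A : Set X, MeasurableSet A →
      ENNReal.ofReal ε * ν p A ≤ min (P p.1 A) (P p.2 A))
    -- the residual kernel R̄
    (Rbar : Kernel (X × X) (X × X)) [IsMarkovKernel Rbar]
    (hRbar1 : ∀ p ∈ Cbar, ∀ A : Set X, MeasurableSet A →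
      ENNReal.ofReal (1 - ε) * Rbar p (A ×ˢ Set.univ) + ENNReal.ofReal ε * ν p A = P p.1 A)
    (hRbar2 : ∀ p ∈ Cbar, ∀ A : Set X, MeasurableSet A →
      ENNReal.ofReal (1 - ε) * Rbar p (Set.univ ×ˢ A) + ENNReal.ofReal ε * ν p A = P p.2 A)
    -- the kernel P̄
    (Pbar : Kernel (X × X) (X × X)) [IsMarkovKernel Pbar]
    (hPbar1 : ∀ p ∈ Cbar, ∀ A A' : Set X, MeasurableSet A → MeasurableSet A' →
      Pbar p (A ×ˢ A') = ENNReal.ofReal (1 - ε) * Rbar p (A ×ˢ A') +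
        ENNReal.ofReal ε * ν p (A ∩ A'))
    (hPbar2 : ∀ p ∉ Cbar, ∀ A : Set X, MeasurableSet A →
      Pbar p (A ×ˢ Set.univ) = P p.1 A ∧ Pbar p (Set.univ ×ˢ A) = P p.2 A)
    -- the kernel P*
    (Pstar : Kernel (X × X) (X × X))
    (hPstar1 : ∀ p ∈ Cbar, Pstar p = Rbar p) (hPstar2 : ∀ p ∉ Cbar, Pstar p = Pbar p)
    (ξ ξ' : Measure X) [IsProbabilityMeasure ξ] [IsProbabilityMeasure ξ']
    (n : ℕ) (hn : 1 ≤ n)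
    (f : X → ℝ) (hf1 : ∀ x, 1 ≤ f x) (hfm : Measurable f)
    (φ : X → ℝ) (hφm : Measurable φ)
    (c : ℝ) (hc : ∀ x, |φ x| ≤ c * f x)
    (hφint : Integrable φ (iterMeas P ξ n)) (hφint' : Integrable φ (iterMeas P ξ' n)) :
    ENNReal.ofReal |∫ x, φ x ∂(iterMeas P ξ n) - ∫ x, φ x ∂(iterMeas P ξ' n)| ≤
      ENNReal.ofReal c * chainExp Pstar (ξ.prod ξ') n
        (fun v => (ENNReal.ofReal (f (v (Fin.last n)).1) + ENNReal.ofReal (f (v (Fin.last n)).2)) *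
          ENNReal.ofReal (1 - ε) ^
            (∑ i : Fin n, Set.indicator Cbar (fun _ => (1 : ℕ)) (v i.castSucc))) := by
  have : Nonempty X := ξ.nonempty_of_neZero
  have hc0 : 0 ≤ c := by
    obtain ⟨x⟩ := this
    by_contra! hneg
    have := (abs_nonneg _).trans (hc x)
    nlinarith [hf1 x]
  change _ ≤ ENNReal.ofReal c * chainExp Pstar (ξ.prod ξ') n
    (pathWeight Cbar (ENNReal.ofReal (1 - ε))
      (fun p => ENNReal.ofReal (f p.1) + ENNReal.ofReal (f p.2)) n)
  set F : X × X → ℝ≥0∞ := fun p => ENNReal.ofReal (f p.1) + ENNReal.ofReal (f p.2) with hFdef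
  set E := chainExp Pstar (ξ.prod ξ') n (pathWeight Cbar (ENNReal.ofReal (1 - ε)) F n) with hE
  -- The bound without absolute value, for `ψ = φ` and `ψ = -φ`, in subtraction-free form.
  have main : ∀ ψ : X → ℝ, Measurable ψ → (∀ x, |ψ x| ≤ c * f x) →
      ∫⁻ x, ENNReal.ofReal (ψ x) ∂(iterMeas P ξ n) +
          ∫⁻ x, ENNReal.ofReal (-ψ x) ∂(iterMeas P ξ' n) ≤
        ∫⁻ x, ENNReal.ofReal (-ψ x) ∂(iterMeas P ξ n) +
          ∫⁻ x, ENNReal.ofReal (ψ x) ∂(iterMeas P ξ' n) + ENNReal.ofReal c * E := by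
    intro ψ hψ hψc
    have mg : Measurable fun x => ENNReal.ofReal (ψ x) := hψ.ennreal_ofReal
    have mh : Measurable fun x => ENNReal.ofReal (-ψ x) := hψ.neg.ennreal_ofReal
    have hF : ∀ p : X × X, ENNReal.ofReal (ψ p.1) + ENNReal.ofReal (-ψ p.2) ≤
        ENNReal.ofReal (-ψ p.1) + ENNReal.ofReal (ψ p.2) + ENNReal.ofReal c * F p := by
      intro p
      refine le_trans ?_ le_add_self
      rw [hFdef, mul_add, ← ENNReal.ofReal_mul hc0, ← ENNReal.ofReal_mul hc0]
      exact add_le_add (ENNReal.ofReal_le_ofReal ((le_abs_self _).trans (hψc _)))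
        (ENNReal.ofReal_le_ofReal ((neg_le_abs _).trans (hψc _)))
    have hpt := iterate_kernelOp_add_le P Pstar Cbar ν (a := ENNReal.ofReal (1 - ε))
      (b := ENNReal.ofReal ε) ENNReal.ofReal_ne_top ENNReal.ofReal_ne_top
      (fun p hp => by rw [hPstar1 p hp]; exact hRbar1 p hp)
      (fun p hp => by rw [hPstar1 p hp]; exact hRbar2 p hp)
      (fun p hp => by rw [hPstar2 p hp]; exact hPbar2 p hp) mg mh F hF n
    rw [lintegral_iterMeas P ξ n mg, lintegral_iterMeas P ξ n mh,
      lintegral_iterMeas P ξ' n mg, lintegral_iterMeas P ξ' n mh, hE, chainExp]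
    -- `ξ ⊗ ξ'` couples `ξ` and `ξ'`, so the one-step bound applies with `a = 1`, `b = 0`.
    simpa only [one_mul] using
      kernelOp_coupling_step (a := 1) (b := 0) ξ ξ' 0 (ξ.prod ξ') ENNReal.ofReal_ne_top
        (fun A _ => by simp [Measure.prod_prod]) (fun A _ => by simp [Measure.prod_prod])
        (measurable_iterate_kernelOp P mg n) (measurable_iterate_kernelOp P mh n) _ hpt
  rcases eq_or_ne (ENNReal.ofReal c * E) ∞ with htop | htop
  · rw [htop]; exact le_top
  have fin : ∀ (ψ : X → ℝ) (μ : Measure X), Integrable ψ μ →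
      ∫⁻ x, ENNReal.ofReal (ψ x) ∂μ ≠ ∞ := fun ψ μ hψ => hψ.lintegral_lt_top.ne
  have A := fin φ _ hφint
  have B := fin φ _ hφint'
  have A' : ∫⁻ x, ENNReal.ofReal (-φ x) ∂(iterMeas P ξ n) ≠ ∞ := fin _ _ hφint.neg
  have B' : ∫⁻ x, ENNReal.ofReal (-φ x) ∂(iterMeas P ξ' n) ≠ ∞ := fin _ _ hφint'.neg
  have m₁ := main φ hφm hc
  have m₂ := main (fun x => -φ x) hφm.neg (fun x => by rw [abs_neg]; exact hc x)
  simp only [neg_neg] at m₂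
  rw [integral_eq_lintegral_pos_part_sub_lintegral_neg_part hφint,
    integral_eq_lintegral_pos_part_sub_lintegral_neg_part hφint']
  refine ENNReal.ofReal_le_of_le_toReal ?_
  have t₁ := ENNReal.toReal_mono (by finiteness) m₁
  have t₂ := ENNReal.toReal_mono (by finiteness) m₂
  rw [ENNReal.toReal_add A B', ENNReal.toReal_add (by finiteness) htop,
    ENNReal.toReal_add A' B] at t₁
  rw [ENNReal.toReal_add A' B, ENNReal.toReal_add (by finiteness) htop,
    ENNReal.toReal_add A B'] at t₂
  rw [abs_le]
  constructor <;> linarith
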